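/- Let S be an AG-groupoid with a left identity e that is both regular and intra-regular. Then for all (∈,∈∨q)-fuzzy bi-ideals f and g of S, f ∩₀.₅ g = (f ∘₀.₅ g) ∩₀.₅ (g ∘₀.₅ f). -/

import Mathlib

/-!
The medial law and a left identity give `a(bc) = b(ac)`, the law of AG**-groupoids. In an
intra-regular AG**-groupoid, `a = x(aa)·y` can be rewritten as `a = y(xa)·a`, which yields
`Sa ⊆ aa·S ⊆ aS` and then `Sa, aS ⊆ (aS)a`. Hence `S` is regular and fuzzy bi-ideals are
two-sided fuzzy ideals. In any regular magma the `0.5`-product of a fuzzy right ideal with a fuzzy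
left ideal is their `0.5`-intersection, the factorization `a = (as)a` attaining the supremum.
-/

/-- An AG-groupoid: a magma satisfying the left invertive law `(ab)c = (cb)a`. -/
def LeftInvertive (S : Type*) [Mul S] : Prop := ∀ a b c : S, a * b * c = c * b * a

/-- A fuzzy subset: a function into `[0,1]`. -/
def IsFuzzy {S : Type*} (f : S → ℝ) : Prop := ∀ x, 0 ≤ f x ∧ f x ≤ 1

/-- An `(∈,∈∨q)`-fuzzy bi-ideal of an AG-groupoid. -/
def FuzzyBiIdealQ {S : Type*} [Mul S] (f : S → ℝ) : Prop :=
  (∀ x y : S, min (min (f x) (f y)) (1 / 2) ≤ f (x * y)) ∧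
  (∀ x y z : S, min (min (f x) (f z)) (1 / 2) ≤ f (x * y * z))

/-- The `0.5`-product of fuzzy subsets. -/
noncomputable def prod05 {S : Type*} [Mul S] (f g : S → ℝ) (a : S) : ℝ :=
  sSup {v : ℝ | ∃ b c : S, a = b * c ∧ v = min (min (f b) (g c)) (1 / 2)}

/-- The `0.5`-intersection of fuzzy subsets. -/
noncomputable def inter05 {S : Type*} (f g : S → ℝ) : S → ℝ :=
  fun a => min (min (f a) (g a)) (1 / 2)

/-- An AG**-groupoid: an AG-groupoid satisfying `a(bc) = b(ac)`. This is the class in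
which bi-ideals are compared with two-sided ideals. -/
structure AGStarStar (S : Type*) [Mul S] : Prop where
  leftInvertive : LeftInvertive S
  left_comm : ∀ a b c : S, a * (b * c) = b * (a * c)

/-- Regularity of a magma in the sense of von Neumann; with no associativity available, the
bracketing is `(ax)a`. -/
def RegularMul (S : Type*) [Mul S] : Prop := ∀ a : S, ∃ x : S, a = a * x * a

/-- Intra-regularity of a magma, with the bracketing `(x(aa))y`. -/
def IntraRegularMul (S : Type*) [Mul S] : Prop := ∀ a : S, ∃ x y : S, a = x * (a * a) * y

/-- An `(∈,∈∨q)`-fuzzy generalized bi-ideal: a fuzzy bi-ideal not required to be a fuzzy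
subgroupoid. -/
def FuzzyGenBiIdealQ {S : Type*} [Mul S] (f : S → ℝ) : Prop :=
  ∀ x y z : S, min (min (f x) (f z)) (1 / 2) ≤ f (x * y * z)

/-- An `(∈,∈∨q)`-fuzzy left ideal, the fuzzy analogue of `SA ⊆ A`. -/
def FuzzyLeftIdealQ {S : Type*} [Mul S] (f : S → ℝ) : Prop :=
  ∀ x a : S, min (f a) (1 / 2) ≤ f (x * a)

/-- An `(∈,∈∨q)`-fuzzy right ideal, the fuzzy analogue of `AS ⊆ A`. -/
def FuzzyRightIdealQ {S : Type*} [Mul S] (f : S → ℝ) : Prop :=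
  ∀ a x : S, min (f a) (1 / 2) ≤ f (a * x)

section Algebra

variable {S : Type*} [Mul S]

theorem LeftInvertive.medial (hS : LeftInvertive S) (a b c d : S) :
    a * b * (c * d) = a * c * (b * d) := by
  rw [hS a b (c * d), hS c d b, hS (b * d) c a]

theorem LeftInvertive.agStarStar_of_left_id (hS : LeftInvertive S) {e : S}
    (he : ∀ x : S, e * x = x) : AGStarStar S where
  leftInvertive := hS
  left_comm a b c := by simpa only [he] using hS.medial e a b c

theorem IntraRegularMul.exists_eq_mul (hintra : IntraRegularMul S) (a : S) :
    ∃ b c : S, a = b * c := by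
  obtain ⟨x, y, hxy⟩ := hintra a
  exact ⟨x * (a * a), y, hxy⟩

namespace AGStarStar

theorem exists_eq_mul_mul_mul_self (hS : AGStarStar S) (hintra : IntraRegularMul S) (a : S) :
    ∃ x y : S, a = y * (x * a) * a := by
  obtain ⟨x, y, hxy⟩ := hintra a
  refine ⟨x, y, ?_⟩
  calc
    a = x * (a * a) * y := hxy
    _ = a * (x * a) * y := by rw [hS.left_comm x a a]
    _ = y * (x * a) * a := hS.leftInvertive _ _ _

theorem exists_mul_eq_mul_self_mul (hS : AGStarStar S) (hintra : IntraRegularMul S) (z a : S) :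
    ∃ w : S, z * a = a * a * w := by
  obtain ⟨x, y, hxy⟩ := hS.exists_eq_mul_mul_mul_self hintra a
  refine ⟨y * z * x, ?_⟩
  calc
    z * a = z * (y * (x * a) * a) := by rw [← hxy]
    _ = y * (x * a) * (z * a) := hS.left_comm _ _ _
    _ = y * z * (x * a * a) := hS.leftInvertive.medial _ _ _ _
    _ = y * z * (a * a * x) := by rw [hS.leftInvertive x a a]
    _ = a * a * (y * z * x) := hS.left_comm _ _ _

theorem mul_self_mul_mul (hS : AGStarStar S) (a p q : S) :
    a * a * (p * q) = a * (a * p * q) := by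
  rw [hS.leftInvertive.medial, hS.left_comm]

theorem exists_mul_left_eq_mul_mul_self (hS : AGStarStar S) (hintra : IntraRegularMul S)
    (z a : S) : ∃ w : S, z * a = a * w * a := by
  obtain ⟨r, hr⟩ := hS.exists_mul_eq_mul_self_mul hintra z a
  obtain ⟨t, ht⟩ := hS.exists_mul_eq_mul_self_mul hintra r a
  obtain ⟨p, q, rfl⟩ := hintra.exists_eq_mul t
  refine ⟨a * p * q, ?_⟩
  calc
    z * a = a * a * r := hr
    _ = r * a * a := hS.leftInvertive _ _ _
    _ = a * a * (p * q) * a := by rw [ht]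
    _ = a * (a * p * q) * a := by rw [hS.mul_self_mul_mul a p q]

theorem exists_mul_right_eq_mul_mul_self (hS : AGStarStar S) (hintra : IntraRegularMul S)
    (a x : S) : ∃ w : S, a * x = a * w * a := by
  obtain ⟨p, q, hpq⟩ := hS.exists_eq_mul_mul_mul_self hintra a
  obtain ⟨r, hr⟩ := hS.exists_mul_eq_mul_self_mul hintra (q * (p * a)) a
  obtain ⟨t, ht⟩ := hS.exists_mul_eq_mul_self_mul hintra a a
  obtain ⟨w, hw⟩ := hS.exists_mul_left_eq_mul_mul_self hintra (x * r * t * a) a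
  refine ⟨w, ?_⟩
  calc
    a * x = a * a * r * x := by rw [← hr, ← hpq]
    _ = x * r * (a * a) := hS.leftInvertive _ _ _
    _ = x * r * (a * a * t) := by rw [← ht]
    _ = a * a * (x * r * t) := hS.left_comm _ _ _
    _ = x * r * t * a * a := hS.leftInvertive _ _ _
    _ = a * w * a := hw

theorem regularMul (hS : AGStarStar S) (hintra : IntraRegularMul S) : RegularMul S := by
  intro a
  obtain ⟨x, y, hxy⟩ := hS.exists_eq_mul_mul_mul_self hintra a
  obtain ⟨w, hw⟩ := hS.exists_mul_left_eq_mul_mul_self hintra (y * (x * a)) a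
  exact ⟨w, hxy.trans hw⟩

end AGStarStar

end Algebra

section Fuzzy

variable {S : Type*}

theorem inter05_comm (f g : S → ℝ) : inter05 f g = inter05 g f := by
  funext a
  simp only [inter05, min_comm (f a)]

theorem inter05_inter05_self (f g : S → ℝ) :
    inter05 (inter05 f g) (inter05 f g) = inter05 f g := by
  funext a
  simp only [inter05, min_self, min_assoc]

variable [Mul S] {f g : S → ℝ}

theorem FuzzyBiIdealQ.fuzzyGenBiIdealQ (hf : FuzzyBiIdealQ f) : FuzzyGenBiIdealQ f := hf.2

theorem FuzzyGenBiIdealQ.min_half_le_mul_mul_self (hf : FuzzyGenBiIdealQ f) (a w : S) :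
    min (f a) (1 / 2) ≤ f (a * w * a) := by
  simpa only [min_self] using hf a w a

theorem FuzzyGenBiIdealQ.fuzzyLeftIdealQ (hf : FuzzyGenBiIdealQ f) (hS : AGStarStar S)
    (hintra : IntraRegularMul S) : FuzzyLeftIdealQ f := by
  intro x a
  obtain ⟨w, hw⟩ := hS.exists_mul_left_eq_mul_mul_self hintra x a
  exact hw ▸ hf.min_half_le_mul_mul_self a w

theorem FuzzyGenBiIdealQ.fuzzyRightIdealQ (hf : FuzzyGenBiIdealQ f) (hS : AGStarStar S)
    (hintra : IntraRegularMul S) : FuzzyRightIdealQ f := by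
  intro a x
  obtain ⟨w, hw⟩ := hS.exists_mul_right_eq_mul_mul_self hintra a x
  exact hw ▸ hf.min_half_le_mul_mul_self a w

theorem FuzzyRightIdealQ.min_half_le_inter05_mul (hf : FuzzyRightIdealQ f)
    (hg : FuzzyLeftIdealQ g) (b c : S) :
    min (min (f b) (g c)) (1 / 2) ≤ inter05 f g (b * c) :=
  le_min
    (le_min ((min_le_min_right _ (min_le_left _ _)).trans (hf b c))
      ((min_le_min_right _ (min_le_right _ _)).trans (hg b c)))
    (min_le_right _ _)

theorem FuzzyRightIdealQ.inter05_le_min_half (hf : FuzzyRightIdealQ f) (g : S → ℝ) (a x : S) :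
    inter05 f g a ≤ min (min (f (a * x)) (g a)) (1 / 2) :=
  le_min
    (le_min ((min_le_min_right _ (min_le_left _ _)).trans (hf a x))
      ((min_le_left _ _).trans (min_le_right _ _)))
    (min_le_right _ _)

theorem min_half_le_prod05 (f g : S → ℝ) (b c : S) :
    min (min (f b) (g c)) (1 / 2) ≤ prod05 f g (b * c) := by
  refine le_csSup ⟨1 / 2, ?_⟩ ⟨b, c, rfl, rfl⟩
  rintro _ ⟨_, _, _, rfl⟩
  exact min_le_right _ _

theorem prod05_le {a : S} {r : ℝ} (ha : ∃ b c : S, a = b * c)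
    (h : ∀ b c : S, a = b * c → min (min (f b) (g c)) (1 / 2) ≤ r) : prod05 f g a ≤ r := by
  obtain ⟨b₀, c₀, ha₀⟩ := ha
  refine csSup_le ⟨_, b₀, c₀, ha₀, rfl⟩ ?_
  rintro _ ⟨b, c, hbc, rfl⟩
  exact h b c hbc

theorem FuzzyRightIdealQ.prod05_eq_inter05 (hf : FuzzyRightIdealQ f) (hg : FuzzyLeftIdealQ g)
    (hreg : RegularMul S) : prod05 f g = inter05 f g := by
  funext a
  obtain ⟨s, hs⟩ := hreg a
  apply le_antisymm
  · exact prod05_le ⟨a * s, a, hs⟩ fun b c hbc => hbc ▸ hf.min_half_le_inter05_mul hg b c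
  · calc
      inter05 f g a ≤ min (min (f (a * s)) (g a)) (1 / 2) := hf.inter05_le_min_half g a s
      _ ≤ prod05 f g (a * s * a) := min_half_le_prod05 f g (a * s) a
      _ = prod05 f g a := by rw [← hs]

end Fuzzy

theorem inter05_eq_prod05_inter05_of_regular_intraRegular_general {S : Type*} [Mul S]
    (hS : AGStarStar S) (hintra : IntraRegularMul S) {f g : S → ℝ}
    (hf : FuzzyGenBiIdealQ f) (hg : FuzzyGenBiIdealQ g) :
    inter05 f g = inter05 (prod05 f g) (prod05 g f) := by
  have hreg : RegularMul S := hS.regularMul hintra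
  have hfg : prod05 f g = inter05 f g :=
    (hf.fuzzyRightIdealQ hS hintra).prod05_eq_inter05 (hg.fuzzyLeftIdealQ hS hintra) hreg
  have hgf : prod05 g f = inter05 g f :=
    (hg.fuzzyRightIdealQ hS hintra).prod05_eq_inter05 (hf.fuzzyLeftIdealQ hS hintra) hreg
  rw [hfg, hgf, inter05_comm g f, inter05_inter05_self]

/-- if `S` is a regular and intra-regular AG-groupoid with a left identity
`e`, then `f ∩₀.₅ g = (f ∘₀.₅ g) ∩₀.₅ (g ∘₀.₅ f)` for all `(∈,∈∨q)`-fuzzy bi-ideals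
`f` and `g` of `S`. -/
theorem inter05_eq_prod05_inter05_of_regular_intraRegular {S : Type*} [Mul S]
    (hS : LeftInvertive S) (e : S) (he : ∀ x : S, e * x = x)
    (hreg : ∀ a : S, ∃ x : S, a = a * x * a)
    (hintra : ∀ a : S, ∃ x y : S, a = x * (a * a) * y) :
    ∀ f g : S → ℝ, IsFuzzy f → IsFuzzy g → FuzzyBiIdealQ f → FuzzyBiIdealQ g →
      inter05 f g = inter05 (prod05 f g) (prod05 g f) := by
  intro f g _ _ hf hg
  exact inter05_eq_prod05_inter05_of_regular_intraRegular_general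
    (hS.agStarStar_of_left_id he) hintra hf.fuzzyGenBiIdealQ hg.fuzzyGenBiIdealQ
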